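/- Let X be a connected graph. Suppose for each pair of vertices a, b there is a connected subgraph A(a,b) containing a and b such that: (i) if i(a,b) ≤ 2 then A(a,b) has diameter at most 2, and (ii) there is a constant D such that for all a, b, d, every vertex of A(a,b) is within distance D of A(a,d) ∪ A(d,b). Then X is δ-hyperbolic for some δ depending only on D. -/

import Mathlib

/-- Gromov hyperbolicity of a connected graph with its path metric, expressed by the
four-point condition (equivalent, up to a universal change of constant, to all geodesic
triangles being `δ`-thin). -/
def GromovHyperbolicGraph {V : Type*} (G : SimpleGraph V) (δ : ℝ) : Prop :=
  0 ≤ δ ∧ ∀ x y z w : V,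
    (G.dist x z : ℝ) + (G.dist y w : ℝ) ≤
      max ((G.dist x y : ℝ) + (G.dist z w : ℝ)) ((G.dist x w : ℝ) + (G.dist y z : ℝ)) + δ

/-!
Let `w ∈ A a b`. Bisecting a geodesic from `a` to `b` repeatedly shows that `w` lies within
`O(D log (d(a, b)))` of a geodesic. To remove the logarithm, argue by induction on `d(a, b)`: the
induction hypothesis puts `w` near some point `m` of a geodesic, with a slightly too large error.
Choose `p` and `q` on the geodesic on either side of `m`, at a fixed large distance. The point `w`
is close to `A a p ∪ A p q ∪ A q b`, but by induction the outer two sets stay near geodesics that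
avoid a large ball around `m`. Hence `w` is close to `A p q`, and the logarithmic bound applied to
the bounded distance `d(p, q)` recovers the original error, because `2 ^ k` outgrows linear
functions of `k`.

Consequently `A x z`, being connected and covered by neighbourhoods of `A x y` and `A y z`, contains
a point near geodesics of all three sides of the triangle `x y z`; comparing it with a fourth point
`w` gives the four-point condition.
-/

section Geodesics

variable {V : Type*} {X : SimpleGraph V} {a b c m p q w w' x z : V} {k r s : ℕ} {S T U : Set V}

/-- The union of all geodesics from `a` to `b` in a connected graph, encoded by equality in the
triangle inequality. -/
def geodesicInterval (X : SimpleGraph V) (a b : V) : Set V :=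
  {s | X.dist a s + X.dist s b = X.dist a b}

/-- The closed `r`-neighbourhood of the union of all geodesics from `a` to `b`. -/
def geodesicNbhd (X : SimpleGraph V) (r : ℕ) (a b : V) : Set V :=
  {w | ∃ s ∈ geodesicInterval X a b, X.dist w s ≤ r}

theorem mem_geodesicInterval :
    c ∈ geodesicInterval X a b ↔ X.dist a c + X.dist c b = X.dist a b :=
  .rfl

theorem left_mem_geodesicInterval : a ∈ geodesicInterval X a b := by
  simp [mem_geodesicInterval]

theorem right_mem_geodesicInterval : b ∈ geodesicInterval X a b := by
  simp [mem_geodesicInterval]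

theorem geodesicInterval_comm (X : SimpleGraph V) (a b : V) :
    geodesicInterval X a b = geodesicInterval X b a := by
  ext s
  simp only [mem_geodesicInterval, X.dist_comm (u := b), X.dist_comm (v := a), add_comm]

theorem exists_mem_geodesicInterval_dist_eq (hX : X.Connected) (hk : k ≤ X.dist a b) :
    ∃ c ∈ geodesicInterval X a b, X.dist a c = k := by
  obtain ⟨γ, hγ⟩ := hX.exists_walk_length_eq_dist a b
  have take_le := SimpleGraph.dist_le (γ.take k)
  have drop_le := SimpleGraph.dist_le (γ.drop k)
  have triangle : X.dist a b ≤ X.dist a (γ.getVert k) + X.dist (γ.getVert k) b := hX.dist_triangle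
  rw [SimpleGraph.Walk.take_length] at take_le
  rw [SimpleGraph.Walk.drop_length] at drop_le
  refine ⟨γ.getVert k, ?_, ?_⟩
  · rw [mem_geodesicInterval]
    omega
  · omega

theorem exists_mem_geodesicInterval_eq_or_dist_eq (hX : X.Connected) (a m : V) (r : ℕ) :
    ∃ p ∈ geodesicInterval X a m, X.dist p m ≤ r ∧ (p = a ∨ X.dist p m = r) := by
  rcases le_total (X.dist a m) r with h | h
  · exact ⟨a, left_mem_geodesicInterval, h, .inl rfl⟩
  · rw [X.dist_comm] at h
    obtain ⟨p, hp, hpm⟩ := exists_mem_geodesicInterval_dist_eq hX h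
    rw [X.dist_comm] at hpm
    exact ⟨p, geodesicInterval_comm X m a ▸ hp, hpm.le, .inr hpm⟩

theorem geodesicInterval_subset (hX : X.Connected) (hm : m ∈ geodesicInterval X a b)
    (hp : p ∈ geodesicInterval X a m) (hq : q ∈ geodesicInterval X m b) :
    geodesicInterval X p q ⊆ geodesicInterval X a b := by
  intro s hs
  have has : X.dist a s ≤ X.dist a p + X.dist p s := hX.dist_triangle
  have hsb : X.dist s b ≤ X.dist s q + X.dist q b := hX.dist_triangle
  have hpq : X.dist p q ≤ X.dist p m + X.dist m q := hX.dist_triangle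
  have hab : X.dist a b ≤ X.dist a s + X.dist s b := hX.dist_triangle
  rw [mem_geodesicInterval] at *
  omega

theorem geodesicInterval_subset_left (hX : X.Connected) (hc : c ∈ geodesicInterval X a b) :
    geodesicInterval X a c ⊆ geodesicInterval X a b :=
  geodesicInterval_subset hX hc left_mem_geodesicInterval left_mem_geodesicInterval

theorem geodesicInterval_subset_right (hX : X.Connected) (hc : c ∈ geodesicInterval X a b) :
    geodesicInterval X c b ⊆ geodesicInterval X a b :=
  geodesicInterval_subset hX hc right_mem_geodesicInterval right_mem_geodesicInterval

theorem geodesicNbhd_mono_interval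
    (h : geodesicInterval X a b ⊆ geodesicInterval X x z) :
    geodesicNbhd X r a b ⊆ geodesicNbhd X r x z :=
  fun _ ⟨s, hs, hws⟩ ↦ ⟨s, h hs, hws⟩

theorem geodesicNbhd_mono_radius (h : r ≤ s) : geodesicNbhd X r a b ⊆ geodesicNbhd X s a b :=
  fun _ ⟨t, ht, hwt⟩ ↦ ⟨t, ht, hwt.trans h⟩

theorem geodesicNbhd_comm (X : SimpleGraph V) (r : ℕ) (a b : V) :
    geodesicNbhd X r a b = geodesicNbhd X r b a := by
  simp only [geodesicNbhd, geodesicInterval_comm X a b]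

theorem left_mem_geodesicNbhd : a ∈ geodesicNbhd X r a b :=
  ⟨a, left_mem_geodesicInterval, by simp⟩

theorem right_mem_geodesicNbhd : b ∈ geodesicNbhd X r a b :=
  ⟨b, right_mem_geodesicInterval, by simp⟩

theorem mem_geodesicNbhd_add (hX : X.Connected) (hw : w ∈ geodesicNbhd X r a b)
    (h : X.dist w' w ≤ s) : w' ∈ geodesicNbhd X (r + s) a b := by
  obtain ⟨t, ht, hwt⟩ := hw
  have triangle : X.dist w' t ≤ X.dist w' w + X.dist w t := hX.dist_triangle
  exact ⟨t, ht, by omega⟩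

theorem dist_add_dist_le_of_mem_geodesicNbhd (hX : X.Connected)
    (hw : w ∈ geodesicNbhd X r a b) : X.dist a w + X.dist w b ≤ X.dist a b + 2 * r := by
  obtain ⟨s, hs, hws⟩ := hw
  have haw : X.dist a w ≤ X.dist a s + X.dist s w := hX.dist_triangle
  have hwb : X.dist w b ≤ X.dist w s + X.dist s b := hX.dist_triangle
  rw [X.dist_comm (u := s)] at haw
  rw [mem_geodesicInterval] at hs
  omega

theorem dist_le_dist_add_of_mem_geodesicNbhd (hX : X.Connected)
    (hp : p ∈ geodesicInterval X a m) (hw : w ∈ geodesicNbhd X r a p) :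
    X.dist p m ≤ X.dist w m + r := by
  obtain ⟨s, hs, hws⟩ := hw
  have ham : X.dist a m ≤ X.dist a s + X.dist s m := hX.dist_triangle
  have hsm : X.dist s m ≤ X.dist s w + X.dist w m := hX.dist_triangle
  rw [X.dist_comm (u := s) (v := w)] at hsm
  rw [mem_geodesicInterval] at hs hp
  omega

theorem exists_dist_le_one_of_subset_union (hS : (X.induce S).Preconnected) (hcover : S ⊆ T ∪ U)
    (hxS : x ∈ S) (hxT : x ∈ T) (hzS : z ∈ S) (hzU : z ∈ U) :
    ∃ u ∈ S, u ∈ T ∧ ∃ v ∈ U, X.dist v u ≤ 1 := by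
  by_cases hzT : z ∈ T
  · exact ⟨z, hzS, hzT, z, hzU, by simp⟩
  · obtain ⟨γ⟩ := hS ⟨x, hxS⟩ ⟨z, hzS⟩
    obtain ⟨e, -, hfst, hsnd⟩ := γ.exists_boundary_dart (Subtype.val ⁻¹' T) hxT hzT
    have hadj : X.Adj e.snd e.fst := e.adj.symm
    exact ⟨e.fst, e.fst.2, hfst, e.snd, (hcover e.snd.2).resolve_left hsnd,
      (SimpleGraph.dist_eq_one_iff_adj.mpr hadj).le⟩

end Geodesics

theorem exists_mul_add_le_two_pow (a b : ℕ) : ∃ k, a * k + b ≤ 2 ^ k := by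
  set m := 2 * a + b with hm
  refine ⟨2 * m, ?_⟩
  calc a * (2 * m) + b ≤ m * m + m := by nlinarith [Nat.zero_le (b * m)]
    _ ≤ (m + 1) * (m + 1) := by nlinarith
    _ ≤ 2 ^ m * 2 ^ m := Nat.mul_le_mul Nat.lt_two_pow_self Nat.lt_two_pow_self
    _ = 2 ^ (2 * m) := by rw [← pow_add, ← two_mul]

/-- A family of vertex sets `A a b ∋ a, b` whose triangles are `D`-slim and whose members over
edges have diameter at most `K`: the candidates for coarse geodesics in the Masur–Schleimer and
Bowditch criterion. Connectedness of the induced subgraphs `A a b` is not part of the notion. -/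
structure IsSlimFamily {V : Type*} (X : SimpleGraph V) (K D : ℕ) (A : V → V → Set V) : Prop where
  left_mem : ∀ a b, a ∈ A a b
  right_mem : ∀ a b, b ∈ A a b
  dist_le_of_adj : ∀ a b, X.Adj a b → ∀ x ∈ A a b, ∀ y ∈ A a b, X.dist x y ≤ K
  slim : ∀ a b d, ∀ x ∈ A a b, ∃ y, (y ∈ A a d ∨ y ∈ A d b) ∧ X.dist x y ≤ D

namespace IsSlimFamily

variable {V : Type*} {X : SimpleGraph V} {K D k r s H : ℕ} {A : V → V → Set V}
  {a b c d m w : V}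

theorem subset_union_geodesicNbhd (h : IsSlimFamily X K D A) (hX : X.Connected)
    (had : A a d ⊆ geodesicNbhd X r a d) (hdb : A d b ⊆ geodesicNbhd X r d b) :
    A a b ⊆ geodesicNbhd X (r + D) a d ∪ geodesicNbhd X (r + D) d b := by
  intro w hw
  obtain ⟨y, hy, hwy⟩ := h.slim a b d w hw
  exact hy.imp (fun hy ↦ mem_geodesicNbhd_add hX (had hy) hwy)
    (fun hy ↦ mem_geodesicNbhd_add hX (hdb hy) hwy)

theorem subset_geodesicNbhd_add (h : IsSlimFamily X K D A) (hX : X.Connected)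
    (hc : c ∈ geodesicInterval X a b)
    (hac : A a c ⊆ geodesicNbhd X r a c) (hcb : A c b ⊆ geodesicNbhd X r c b) :
    A a b ⊆ geodesicNbhd X (r + D) a b :=
  (h.subset_union_geodesicNbhd hX hac hcb).trans <| Set.union_subset
    (geodesicNbhd_mono_interval (geodesicInterval_subset_left hX hc))
    (geodesicNbhd_mono_interval (geodesicInterval_subset_right hX hc))

theorem exists_dist_le_of_quadrilateral (h : IsSlimFamily X K D A) (hX : X.Connected)
    (hw : w ∈ A a b) (p q : V) :
    ∃ y, (y ∈ A a p ∨ y ∈ A p q ∨ y ∈ A q b) ∧ X.dist w y ≤ 2 * D := by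
  obtain ⟨y, hy | hy, hwy⟩ := h.slim a b p w hw
  · exact ⟨y, .inl hy, by omega⟩
  · obtain ⟨z, hz, hyz⟩ := h.slim p b q y hy
    have triangle : X.dist w z ≤ X.dist w y + X.dist y z := hX.dist_triangle
    exact ⟨z, .inr hz, by omega⟩

theorem dist_le_of_mem_diag (h : IsSlimFamily X K D A) (hX : X.Connected) (hw : w ∈ A a a) :
    X.dist w a ≤ D + K := by
  rcases eq_or_ne w a with rfl | hwa
  · simp
  · have : Nontrivial V := ⟨w, a, hwa⟩
    obtain ⟨c, hac⟩ := hX.preconnected.exists_adj_of_nontrivial a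
    obtain ⟨y, hy, hwy⟩ := h.slim a a c w hw
    have hya : X.dist y a ≤ K := hy.elim
      (fun hy ↦ h.dist_le_of_adj a c hac y hy a (h.left_mem a c))
      (fun hy ↦ h.dist_le_of_adj c a hac.symm y hy a (h.right_mem c a))
    calc X.dist w a ≤ X.dist w y + X.dist y a := hX.dist_triangle
      _ ≤ D + K := add_le_add hwy hya

theorem dist_le_of_dist_le_one (h : IsSlimFamily X K D A) (hX : X.Connected)
    (hab : X.dist a b ≤ 1) (hw : w ∈ A a b) : X.dist w a ≤ D + K := by
  rcases eq_or_ne a b with rfl | hne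
  · exact h.dist_le_of_mem_diag hX hw
  · have hadj : X.Adj a b :=
      SimpleGraph.dist_eq_one_iff_adj.mp (le_antisymm hab (hX.pos_dist_of_ne hne))
    exact (h.dist_le_of_adj a b hadj w hw a (h.left_mem a b)).trans (Nat.le_add_left K D)

theorem subset_geodesicNbhd_of_dist_le_two_pow (h : IsSlimFamily X K D A) (hX : X.Connected)
    (hab : X.dist a b ≤ 2 ^ k) : A a b ⊆ geodesicNbhd X ((k + 1) * D + K) a b := by
  induction k generalizing a b with
  | zero =>
    intro w hw
    have hwa := h.dist_le_of_dist_le_one hX (by simpa using hab) hw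
    exact ⟨a, left_mem_geodesicInterval, by simpa using hwa⟩
  | succ k ih =>
    obtain ⟨c, hc, hac⟩ := exists_mem_geodesicInterval_dist_eq hX (Nat.div_le_self (X.dist a b) 2)
    have hcb : X.dist a c + X.dist c b = X.dist a b := hc
    rw [pow_succ] at hab
    have hA := h.subset_geodesicNbhd_add hX hc (ih (by omega)) (ih (by omega))
    rwa [show (k + 1 + 1) * D + K = (k + 1) * D + K + D by ring]

theorem subset_geodesicNbhd_add_of_forall_dist_lt (h : IsSlimFamily X K D A) (hX : X.Connected)
    (hab : 1 < X.dist a b)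
    (ih : ∀ u v, X.dist u v < X.dist a b → A u v ⊆ geodesicNbhd X r u v) :
    A a b ⊆ geodesicNbhd X (r + D) a b := by
  obtain ⟨c, hc, hac⟩ := exists_mem_geodesicInterval_dist_eq hX hab.le
  have hcb : X.dist a c + X.dist c b = X.dist a b := hc
  exact h.subset_geodesicNbhd_add hX hc (ih a c (by omega)) (ih c b (by omega))

theorem dist_le_or_exists_mem_of_dist_le (h : IsSlimFamily X K D A) (hX : X.Connected)
    (ih : ∀ u v, X.dist u v < X.dist a b → A u v ⊆ geodesicNbhd X r u v)
    (hm : m ∈ geodesicInterval X a b) (hw : w ∈ A a b) (hwm : X.dist w m ≤ s) :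
    X.dist w a ≤ 3 * D + K ∨ X.dist w b ≤ 3 * D + K ∨
      ∃ p ∈ geodesicInterval X a m, ∃ q ∈ geodesicInterval X m b,
        X.dist p q ≤ 2 * (r + s + 2 * D + 1) ∧ ∃ y ∈ A p q, X.dist w y ≤ 2 * D := by
  -- At this distance from `m`, the `r`-neighbourhoods of the outer pieces miss the
  -- `(s + 2 * D)`-ball around `m`.
  obtain ⟨p, hp, hpm, hpa⟩ := exists_mem_geodesicInterval_eq_or_dist_eq hX a m (r + s + 2 * D + 1)
  obtain ⟨q, hq, hqm, hqb⟩ := exists_mem_geodesicInterval_eq_or_dist_eq hX b m (r + s + 2 * D + 1)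
  obtain ⟨y, hy, hwy⟩ := h.exists_dist_le_of_quadrilateral hX hw p q
  have near_of_near {e : V} (hye : X.dist y e ≤ D + K) : X.dist w e ≤ 3 * D + K := by
    have triangle : X.dist w e ≤ X.dist w y + X.dist y e := hX.dist_triangle
    omega
  have notMem_of_dist_eq {e t : V} (ht : t ∈ geodesicInterval X e m)
      (htm : X.dist t m = r + s + 2 * D + 1) : y ∉ geodesicNbhd X r e t := fun hyt ↦ by
    have htm_le := dist_le_dist_add_of_mem_geodesicNbhd hX ht hyt
    have hym : X.dist y m ≤ X.dist w y + X.dist w m := X.dist_comm (u := y) ▸ hX.dist_triangle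
    omega
  have hab := mem_geodesicInterval.mp hm
  rcases hy with hy | hy | hy
  · rcases hpa with rfl | hpm_eq
    · exact .inl (near_of_near (h.dist_le_of_mem_diag hX hy))
    · have ham := mem_geodesicInterval.mp hp
      exact absurd (ih a p (by omega) hy) (notMem_of_dist_eq hp hpm_eq)
  · have hpq : X.dist p q ≤ X.dist p m + X.dist q m := by
      rw [X.dist_comm (u := q)]
      exact hX.dist_triangle
    exact .inr (.inr ⟨p, hp, q, geodesicInterval_comm X b m ▸ hq, by omega, y, hy, hwy⟩)
  · rcases hqb with rfl | hqm_eq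
    · exact .inr (.inl (near_of_near (h.dist_le_of_mem_diag hX hy)))
    · have hbm := mem_geodesicInterval.mp hq
      rw [X.dist_comm (u := b) (v := q), X.dist_comm (u := b) (v := m)] at hbm
      exact absurd (geodesicNbhd_comm X r q b ▸ ih q b (by omega) hy) (notMem_of_dist_eq hq hqm_eq)

theorem subset_geodesicNbhd_of_forall_dist_lt (h : IsSlimFamily X K D A) (hX : X.Connected)
    (hH : (k + 3) * D + K ≤ H) (hk : 2 * (2 * H + 3 * D + 1) ≤ 2 ^ k) (hab : 1 < X.dist a b)
    (ih : ∀ u v, X.dist u v < X.dist a b → A u v ⊆ geodesicNbhd X H u v) :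
    A a b ⊆ geodesicNbhd X H a b := by
  intro w hw
  have hDH : 3 * D + K ≤ H := by nlinarith [Nat.zero_le (k * D)]
  obtain ⟨m, hm, hwm⟩ := h.subset_geodesicNbhd_add_of_forall_dist_lt hX hab ih hw
  obtain hwa | hwb | ⟨p, hp, q, hq, hpq, y, hy, hwy⟩ :=
    h.dist_le_or_exists_mem_of_dist_le hX ih hm hw hwm
  · exact ⟨a, left_mem_geodesicInterval, hwa.trans hDH⟩
  · exact ⟨b, right_mem_geodesicInterval, hwb.trans hDH⟩
  · have hy_near := h.subset_geodesicNbhd_of_dist_le_two_pow hX (k := k) (by omega) hy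
    exact geodesicNbhd_mono_radius (by linarith)
      (geodesicNbhd_mono_interval (geodesicInterval_subset hX hm hp hq)
        (mem_geodesicNbhd_add hX hy_near hwy))

theorem subset_geodesicNbhd (h : IsSlimFamily X K D A) (hX : X.Connected)
    (hH : (k + 3) * D + K ≤ H) (hk : 2 * (2 * H + 3 * D + 1) ≤ 2 ^ k) (a b : V) :
    A a b ⊆ geodesicNbhd X H a b := by
  induction hn : X.dist a b using Nat.strong_induction_on generalizing a b with
  | _ n ih =>
    subst hn
    rcases le_or_gt (X.dist a b) 1 with hab | hab
    · have hDH : (0 + 1) * D + K ≤ H := by nlinarith [Nat.zero_le (k * D)]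
      exact (h.subset_geodesicNbhd_of_dist_le_two_pow hX (by simpa using hab)).trans
        (geodesicNbhd_mono_radius hDH)
    · exact h.subset_geodesicNbhd_of_forall_dist_lt hX hH hk hab
        fun u v huv ↦ ih _ huv u v rfl

theorem exists_mem_geodesicNbhd_inter (h : IsSlimFamily X K D A) (hX : X.Connected)
    (hA : ∀ a b, (X.induce (A a b)).Preconnected) (hN : ∀ a b, A a b ⊆ geodesicNbhd X r a b)
    (x y z : V) :
    ∃ m ∈ A x z, m ∈ geodesicNbhd X (r + D + 1) x y ∩ geodesicNbhd X (r + D + 1) y z := by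
  have hcover := h.subset_union_geodesicNbhd hX (hN x y) (hN y z)
  obtain ⟨m, hm, hmxy, v, hvyz, hvm⟩ := exists_dist_le_one_of_subset_union (hA x z) hcover
    (h.left_mem x z) left_mem_geodesicNbhd (h.right_mem x z) right_mem_geodesicNbhd
  rw [X.dist_comm] at hvm
  exact ⟨m, hm, geodesicNbhd_mono_radius (Nat.le_succ _) hmxy, mem_geodesicNbhd_add hX hvyz hvm⟩

theorem dist_add_dist_le_max (h : IsSlimFamily X K D A) (hX : X.Connected)
    (hA : ∀ a b, (X.induce (A a b)).Preconnected) (hN : ∀ a b, A a b ⊆ geodesicNbhd X r a b)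
    (x y z w : V) :
    X.dist x z + X.dist y w ≤
      max (X.dist x y + X.dist z w) (X.dist x w + X.dist y z) + 4 * (r + D + 1) := by
  obtain ⟨m, hm, hmxy, hmyz⟩ := h.exists_mem_geodesicNbhd_inter hX hA hN x y z
  have hxz : X.dist x z ≤ X.dist x m + X.dist m z := hX.dist_triangle
  have hyw : X.dist y w ≤ X.dist m y + X.dist m w := X.dist_comm (u := y) ▸ hX.dist_triangle
  have hxy := dist_add_dist_le_of_mem_geodesicNbhd hX hmxy
  have hyz := dist_add_dist_le_of_mem_geodesicNbhd hX hmyz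
  rw [X.dist_comm (u := y) (v := m)] at hyz
  rcases h.subset_union_geodesicNbhd hX (hN x w) (hN w z) hm with hmxw | hmwz
  · have hxw := dist_add_dist_le_of_mem_geodesicNbhd hX hmxw
    omega
  · have hwz := dist_add_dist_le_of_mem_geodesicNbhd hX hmwz
    rw [X.dist_comm (u := w) (v := m), X.dist_comm (u := w) (v := z)] at hwz
    omega

theorem gromovHyperbolicGraph (h : IsSlimFamily X K D A) (hX : X.Connected)
    (hA : ∀ a b, (X.induce (A a b)).Preconnected)
    (hH : (k + 3) * D + K ≤ H) (hk : 2 * (2 * H + 3 * D + 1) ≤ 2 ^ k) :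
    GromovHyperbolicGraph X (4 * (H + D + 1) : ℕ) :=
  ⟨Nat.cast_nonneg _, fun x y z w ↦ mod_cast
    h.dist_add_dist_le_max hX hA (h.subset_geodesicNbhd hX hH hk) x y z w⟩

end IsSlimFamily

theorem exists_radius_le_two_pow (K D : ℕ) :
    ∃ k H : ℕ, (k + 3) * D + K ≤ H ∧ 2 * (2 * H + 3 * D + 1) ≤ 2 ^ k := by
  obtain ⟨k, hk⟩ := exists_mul_add_le_two_pow (4 * D) (18 * D + 4 * K + 2)
  exact ⟨k, (k + 3) * D + K, le_rfl, by linarith⟩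

theorem stmt_7_general.{u} :
    ∃ f : ℝ → ℝ → ℝ, ∀ (V : Type u) (X : SimpleGraph V), X.Connected →
      ∀ (A : V → V → Set V),
      (∀ a b : V, a ∈ A a b) →
      (∀ a b : V, b ∈ A a b) →
      (∀ a b : V, (SimpleGraph.induce (A a b) X).Connected) →
      ∀ K : ℝ,
      (∀ a b : V, X.Adj a b → ∀ x ∈ A a b, ∀ y ∈ A a b, (X.dist x y : ℝ) ≤ K) →
      ∀ D : ℝ,
      (∀ a b d : V, ∀ x ∈ A a b,
        ∃ y, (y ∈ A a d ∨ y ∈ A d b) ∧ (X.dist x y : ℝ) ≤ D) →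
      GromovHyperbolicGraph X (f K D) := by
  choose k H hH hk using exists_radius_le_two_pow
  refine ⟨fun K D ↦ (4 * (H ⌈K⌉₊ ⌈D⌉₊ + ⌈D⌉₊ + 1) : ℕ), ?_⟩
  intro V X hX A left_mem right_mem hA K hadj D hslim
  have hfamily : IsSlimFamily X ⌈K⌉₊ ⌈D⌉₊ A :=
    { left_mem, right_mem
      dist_le_of_adj a b hab x hx y hy := mod_cast (hadj a b hab x hx y hy).trans (Nat.le_ceil K)
      slim a b d x hx :=
        let ⟨y, hy, hxy⟩ := hslim a b d x hx
        ⟨y, hy, mod_cast hxy.trans (Nat.le_ceil D)⟩ }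
  exact hfamily.gromovHyperbolicGraph hX (fun a b ↦ (hA a b).preconnected) (hH _ _) (hk _ _)

/-- If a connected graph `X` carries, for each pair of vertices `a, b`, a connected subgraph
`A a b` containing `a` and `b`, such that (i) `A a b` has diameter at most `2` whenever
`a` and `b` are adjacent (i.e. the corresponding curves intersect at most twice), and
(ii) there is `D` such that every vertex of `A a b` is within distance `D` of
`A a d ∪ A d b`, then `X` is `δ`-hyperbolic for some `δ` depending only on `D`. -/
theorem stmt_7 :
    ∃ f : ℝ → ℝ, ∀ (V : Type) (X : SimpleGraph V), X.Connected →
      ∀ (A : V → V → Set V),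
      (∀ a b : V, a ∈ A a b) →
      (∀ a b : V, b ∈ A a b) →
      (∀ a b : V, (SimpleGraph.induce (A a b) X).Connected) →
      (∀ a b : V, X.Adj a b → ∀ x ∈ A a b, ∀ y ∈ A a b, (X.dist x y : ℝ) ≤ 2) →
      ∀ D : ℝ, 0 < D →
      (∀ a b d : V, ∀ x ∈ A a b,
        ∃ y, (y ∈ A a d ∨ y ∈ A d b) ∧ (X.dist x y : ℝ) ≤ D) →
      GromovHyperbolicGraph X (f D) := by
  obtain ⟨f, hf⟩ := stmt_7_general
  exact ⟨f 2, fun V X hX A hleft hright hA hadj D _ ↦ hf V X hX A hleft hright hA 2 hadj D⟩
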